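/- Let A be a commutative Noetherian local ring and 0 → M' → M → M'' → 0 a short exact sequence of finitely generated A-modules with M'' of finite length. Then for every ideal q such that M/qM has finite length and every minimal prime p of Supp(M) with dim(A/p) = dim M ≥ 1: length_{A_p}(M'_p) = length_{A_p}(M_p), and the Hilbert–Samuel polynomials of M' and M with respect to q have the same leading term. -/

import Mathlib

/-!
For the localizations: `dim A/p ≥ 1` forces `p` to differ from the maximal ideal, while every
element of the maximal ideal acts nilpotently on a module of finite length. Hence `M''_p = 0` and
`M'_p → M_p` is an isomorphism.

For the leading coefficients: right exactness and Artin–Rees give, for some `k` and all `n`,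
`ℓ(M'/q^n M') ≤ ℓ(M/q^(n+k) M)` and `ℓ(M/q^n M) ≤ ℓ(M'/q^n M') + ℓ(M'')`, that is
`P'(n) ≤ P(n + k)` and `P(n) ≤ P'(n) + c` for large `n`. Dividing by `n ^ r` and letting `n → ∞`
identifies the degree-`r` coefficients (`hs_coeff_eq`), provided both polynomials have degree at
most `r`.

The bound `deg P ≤ r = dim M` is the inequality `d(M) ≤ dim M` of dimension theory, proved in
`exists_length_bound`. By Krull's height theorem there are `x₁, …, xᵣ` in the maximal ideal with
`M/(x₁, …, xᵣ)M` of finite length `K`. A power `xᵢ ^ s` maps `M` into `qM`, and so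
`ℓ(M/q^n M) ≤ ℓ(M/(x₁ ^ (s n), …, xᵣ ^ (s n)) M) ≤ (s n) ^ r K`; the second inequality follows from
`ℓ(M/((xy) + J)M) ≤ ℓ(M/((x) + J)M) + ℓ(M/((y) + J)M)`.
-/

/-- The length of a module, as the Krull dimension of its lattice of submodules. -/
noncomputable def mLength (R : Type*) [CommRing R] (M : Type*) [AddCommGroup M] [Module R M] :
    WithBot ℕ∞ :=
  Order.krullDim (Submodule R M)

/-- The (Krull) dimension of a module `M` over `R`, i.e. `dim (R / Ann M)`. -/
noncomputable def mDim (R : Type*) [CommRing R] (M : Type*) [AddCommGroup M] [Module R M] :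
    WithBot ℕ∞ :=
  ringKrullDim (R ⧸ Module.annihilator R M)

/-- The length of the localization `M_p` over the local ring `R_p`. -/
noncomputable def locLen (R : Type*) [CommRing R] (M : Type*) [AddCommGroup M] [Module R M]
    (p : PrimeSpectrum R) : WithBot ℕ∞ :=
  mLength (Localization p.asIdeal.primeCompl) (LocalizedModule p.asIdeal.primeCompl M)

/-- The `n`-th value of the Hilbert–Samuel function of the ideal `q` on `M`:
the length of `M / q^n M`. -/
noncomputable def hsVal (R : Type*) [CommRing R] (q : Ideal R) (M : Type*) [AddCommGroup M]
    [Module R M] (n : ℕ) : WithBot ℕ∞ :=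
  mLength R (M ⧸ (q ^ n • ⊤ : Submodule R M))

/-- `P` is a Hilbert–Samuel polynomial of `(q, M)`: for all large `n`,
`length (M / q^n M)` is finite and equal to `P.eval n`. -/
def IsHSPoly (R : Type*) [CommRing R] (q : Ideal R) (M : Type*) [AddCommGroup M] [Module R M]
    (P : Polynomial ℚ) : Prop :=
  ∃ N : ℕ, ∀ n ≥ N, ∃ c : ℕ, hsVal R q M n = (c : ℕ∞) ∧ (c : ℚ) = P.eval (n : ℚ)

/-! ### Asymptotics of polynomials on the natural numbers -/

open Filter Topology Polynomial in
theorem hs_tendsto_coeff (P : ℚ[X]) (r : ℕ) (h : P.natDegree ≤ r) :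
    Tendsto (fun n : ℕ => P.eval (n : ℚ) / (n : ℚ) ^ r) atTop (𝓝 (P.coeff r)) := by
  have hX : (X ^ r : ℚ[X]).degree = r := degree_X_pow r
  have key : Tendsto (fun x : ℚ => P.eval x / (X ^ r : ℚ[X]).eval x) atTop (𝓝 (P.coeff r)) := by
    rcases lt_or_eq_of_le (natDegree_le_iff_degree_le.mp h) with hlt | heq
    · rw [coeff_eq_zero_of_degree_lt hlt]
      exact div_tendsto_atTop_zero_of_degree_lt P _ (by rwa [hX])
    · have := div_tendsto_atTop_leadingCoeff_div_of_degree_eq P (X ^ r) (by rw [heq, hX])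
      simpa [leadingCoeff, natDegree_eq_of_degree_eq_some heq] using this
  simpa [Function.comp_def] using key.comp tendsto_natCast_atTop_atTop

open Filter Topology Polynomial in
/-- Eventual nonnegativity on `ℕ` is needed: it turns the one-sided bound `P ≤ Q` into a bound
on `|P|`. -/
theorem hs_natDegree_le (P Q : ℚ[X]) (r : ℕ) (hQ : Q.natDegree ≤ r)
    (h : ∀ᶠ n : ℕ in atTop, 0 ≤ P.eval (n : ℚ) ∧ P.eval (n : ℚ) ≤ Q.eval (n : ℚ)) :
    P.natDegree ≤ r := by
  by_contra! hlt
  have h1 := (abs_div_tendsto_atTop_atTop_of_degree_gt P (X ^ r) (by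
    exact degree_lt_degree (by rwa [natDegree_X_pow])) (by simp)).comp
      (tendsto_natCast_atTop_atTop (R := ℚ))
  have h2 := (hs_tendsto_coeff Q r hQ).eventually_lt_const (lt_add_one (Q.coeff r))
  obtain ⟨n, ⟨h3, h3'⟩, h4, h5⟩ := (h.and (h2.and (h1.eventually_ge_atTop (Q.coeff r + 1)))).exists
  simp only [Function.comp_apply, eval_pow, eval_X] at h5
  have h6 : (0 : ℚ) ≤ (n : ℚ) ^ r := by positivity
  rw [abs_of_nonneg (div_nonneg h3 h6)] at h5
  have := div_le_div_of_nonneg_right h3' h6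
  linarith

open Filter Topology Polynomial in
/-- A shift of the argument by `k` does not change the coefficient in degree `r ≥ natDegree P`,
and a constant `c` does not affect it because `r ≥ 1`; so the two inequalities sandwich
`P'.coeff r`. -/
theorem hs_coeff_eq (P' P : ℚ[X]) (r k : ℕ) (hr : 1 ≤ r) (c : ℚ) (hP : P.natDegree ≤ r)
    (h0 : ∀ᶠ n : ℕ in atTop, 0 ≤ P'.eval (n : ℚ))
    (h1 : ∀ᶠ n : ℕ in atTop, P'.eval (n : ℚ) ≤ P.eval ((n + k : ℕ) : ℚ))
    (h2 : ∀ᶠ n : ℕ in atTop, P.eval (n : ℚ) ≤ P'.eval (n : ℚ) + c) :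
    P'.coeff r = P.coeff r := by
  have hTd : (taylor (k : ℚ) P).natDegree ≤ r := by rwa [natDegree_taylor]
  have hTe (n : ℕ) : (taylor (k : ℚ) P).eval (n : ℚ) = P.eval ((n + k : ℕ) : ℚ) := by
    rw [taylor_eval]; push_cast; rfl
  have hTc : (taylor (k : ℚ) P).coeff r = P.coeff r := by
    rcases lt_or_eq_of_le hP with hlt | heq
    · rw [coeff_eq_zero_of_natDegree_lt hlt,
        coeff_eq_zero_of_natDegree_lt (by rwa [natDegree_taylor])]
    · rw [← heq, coeff_taylor_natDegree]; rfl
  have hP' : P'.natDegree ≤ r := by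
    refine hs_natDegree_le P' _ r hTd ?_
    filter_upwards [h0, h1] with n a b
    exact ⟨a, by rwa [hTe]⟩
  have hS : (P' + C c).natDegree ≤ r := by
    refine (natDegree_add_le _ _).trans (max_le hP' (by simp))
  have hSc : (P' + C c).coeff r = P'.coeff r := by
    rw [coeff_add, coeff_C, if_neg (by omega), add_zero]
  apply le_antisymm
  · rw [← hTc]
    refine le_of_tendsto_of_tendsto (hs_tendsto_coeff P' r hP') (hs_tendsto_coeff _ r hTd) ?_
    filter_upwards [h1] with n b
    rw [hTe]
    gcongr
  · rw [← hSc]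
    refine le_of_tendsto_of_tendsto (hs_tendsto_coeff P r hP) (hs_tendsto_coeff _ r hS) ?_
    filter_upwards [h2] with n b
    have : (P' + C c).eval (n : ℚ) = P'.eval (n : ℚ) + c := by simp
    rw [this]
    gcongr

/-! ### Colengths of ideals generated by powers -/

section
variable {A : Type*} [CommRing A]

/-- Subadditivity of length along `D → B → C` when the image of `D` contains the kernel of
`B → C`; neither map has to be injective or surjective. -/
theorem length_le_add_of_ker_le {B C D : Type*} [AddCommGroup B] [Module A B]
    [AddCommGroup C] [Module A C] [AddCommGroup D] [Module A D]
    (β : D →ₗ[A] B) (α : B →ₗ[A] C) (h : LinearMap.ker α ≤ LinearMap.range β) :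
    Module.length A B ≤ Module.length A D + Module.length A C := by
  rw [Module.length_eq_add_of_exact (LinearMap.ker α).subtype α.rangeRestrict
    (Submodule.subtype_injective _) α.surjective_rangeRestrict (by
      rw [LinearMap.exact_iff]; simp)]
  refine add_le_add ?_ (Module.length_le_of_injective _ (Submodule.subtype_injective _))
  exact (Module.length_le_of_injective _ (Submodule.inclusion_injective h)).trans
    (Module.length_le_of_surjective β.rangeRestrict β.surjective_rangeRestrict)

theorem length_quotient_anti {M : Type*} [AddCommGroup M] [Module A M] {U V : Submodule A M}
    (h : U ≤ V) : Module.length A (M ⧸ V) ≤ Module.length A (M ⧸ U) :=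
  Module.length_le_of_surjective (Submodule.factor h) (Submodule.factor_surjective h)

/-- With `I = (x) + J`, `I' = (y) + J` and `K = (xy) + J`: multiplication by `x` induces a map
`M/I'M → M/KM` whose image contains the kernel of `M/KM → M/IM`. -/
theorem length_quotient_mul (M : Type*) [AddCommGroup M] [Module A M] (x y : A) (J : Ideal A) :
    Module.length A (M ⧸ ((Ideal.span {x * y} ⊔ J) • ⊤ : Submodule A M)) ≤
      Module.length A (M ⧸ ((Ideal.span {y} ⊔ J) • ⊤ : Submodule A M)) +
      Module.length A (M ⧸ ((Ideal.span {x} ⊔ J) • ⊤ : Submodule A M)) := by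
  have hle : ((Ideal.span {x * y} ⊔ J) • ⊤ : Submodule A M) ≤ (Ideal.span {x} ⊔ J) • ⊤ := by
    refine Submodule.smul_mono_left (sup_le_sup_right ?_ J)
    exact Ideal.span_singleton_le_span_singleton.mpr (dvd_mul_right x y)
  have hx : ((Ideal.span {y} ⊔ J) • ⊤ : Submodule A M) ≤
      ((Ideal.span {x * y} ⊔ J) • ⊤ : Submodule A M).comap (LinearMap.lsmul A M x) := by
    rw [Submodule.smul_le]
    intro a ha m _
    rw [Submodule.mem_comap, LinearMap.lsmul_apply, smul_smul]
    refine Submodule.smul_mem_smul ?_ trivial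
    obtain ⟨b, hb, j, hj, rfl⟩ := Submodule.mem_sup.mp ha
    obtain ⟨b, rfl⟩ := Ideal.mem_span_singleton'.mp hb
    rw [mul_add]
    have hxb : x * (b * y) ∈ Ideal.span {x * y} := Ideal.mem_span_singleton'.mpr ⟨b, by ring⟩
    exact Submodule.add_mem_sup hxb (J.mul_mem_left x hj)
  refine length_le_add_of_ker_le (Submodule.mapQ _ _ (LinearMap.lsmul A M x) hx)
    (Submodule.factor hle) ?_
  intro z hz
  obtain ⟨m, rfl⟩ := Submodule.Quotient.mk_surjective _ z
  have hm : m ∈ ((Ideal.span {x} ⊔ J) • ⊤ : Submodule A M) := by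
    rw [← Submodule.Quotient.mk_eq_zero]; exact hz
  rw [Submodule.sup_smul] at hm
  obtain ⟨u, hu, v, hv, rfl⟩ := Submodule.mem_sup.mp hm
  rw [Submodule.ideal_span_singleton_smul] at hu
  obtain ⟨w, -, rfl⟩ := hu
  refine ⟨Submodule.Quotient.mk w, ?_⟩
  rw [Submodule.mapQ_apply, Submodule.Quotient.eq]
  have h2 : v ∈ ((Ideal.span {x * y} ⊔ J) • ⊤ : Submodule A M) :=
    Submodule.smul_mono_left le_sup_right hv
  simpa using h2

theorem length_quotient_pow (M : Type*) [AddCommGroup M] [Module A M] (x : A) (J : Ideal A)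
    (m : ℕ) :
    Module.length A (M ⧸ ((Ideal.span {x ^ m} ⊔ J) • ⊤ : Submodule A M)) ≤
      m * Module.length A (M ⧸ ((Ideal.span {x} ⊔ J) • ⊤ : Submodule A M)) := by
  induction m with
  | zero =>
    have : Subsingleton (M ⧸ ((Ideal.span {x ^ 0} ⊔ J) • ⊤ : Submodule A M)) := by
      rw [Submodule.Quotient.subsingleton_iff]; simp
    rw [Module.length_eq_zero]; simp
  | succ m ih =>
    rw [pow_succ]
    refine (length_quotient_mul M _ _ J).trans ?_
    push_cast
    rw [add_mul, one_mul, add_comm]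
    gcongr

/-- Raising the elements `x₁, …, xₜ` to the power `m` multiplies the colength of
`(x₁, …, xₜ)M` by at most `m ^ t`. The ideal `J` collects the generators already treated
in the induction. -/
theorem length_quotient_span_pow (M : Type*) [AddCommGroup M] [Module A M] (t : Finset A)
    (m : ℕ) (J : Ideal A) :
    Module.length A (M ⧸ ((Ideal.span ((fun x => x ^ m) '' (t : Set A)) ⊔ J) • ⊤ :
      Submodule A M)) ≤
      (m : ℕ∞) ^ t.card * Module.length A (M ⧸ ((Ideal.span t ⊔ J) • ⊤ : Submodule A M)) := by
  classical
  induction t using Finset.induction_on generalizing J with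
  | empty => rw [Finset.coe_empty, Set.image_empty]; simp
  | insert a t ha ih =>
    rw [Finset.coe_insert, Set.image_insert_eq, Ideal.span_insert, Ideal.span_insert,
      Finset.card_insert_of_notMem ha, sup_comm (Ideal.span {a ^ m}), sup_assoc, pow_succ,
      mul_assoc]
    refine (ih _).trans ?_
    gcongr
    rw [sup_left_comm, sup_assoc]
    exact length_quotient_pow M a _ m

/-! ### Parameters and the growth of the Hilbert–Samuel function -/

variable [IsLocalRing A]

/-- The submodules `x ^ n N` stabilize since `N` is Artinian, and the stable value is zero by
Nakayama's lemma. -/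
theorem exists_pow_smul_eq_zero (N : Type*) [AddCommGroup N] [Module A N]
    (hN : IsFiniteLength A N) {x : A} (hx : x ∈ IsLocalRing.maximalIdeal A) :
    ∃ s : ℕ, ∀ z : N, x ^ s • z = 0 := by
  obtain ⟨_, _⟩ := isFiniteLength_iff_isNoetherian_isArtinian.mp hN
  let F : ℕ →o (Submodule A N)ᵒᵈ :=
    ⟨fun n => OrderDual.toDual (Ideal.span {x ^ n} • ⊤ : Submodule A N), by
      intro a b hab
      refine OrderDual.toDual_le_toDual.mpr (Submodule.smul_mono_left ?_)
      exact Ideal.span_singleton_le_span_singleton.mpr (pow_dvd_pow x hab)⟩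
  obtain ⟨s, hs⟩ := IsArtinian.monotone_stabilizes F
  have h1 : (Ideal.span {x ^ s} • ⊤ : Submodule A N) = Ideal.span {x ^ (s + 1)} • ⊤ :=
    hs (s + 1) (by omega)
  have h2 : (Ideal.span {x ^ s} • ⊤ : Submodule A N) = ⊥ := by
    refine Submodule.eq_bot_of_le_smul_of_le_jacobson_bot (Ideal.span {x}) _
      (IsNoetherian.noetherian _) ?_ ?_
    · rw [← Submodule.mul_smul, Ideal.span_singleton_mul_span_singleton, ← pow_succ', ← h1]
    · rw [Ideal.span_singleton_le_iff_mem, IsLocalRing.jacobson_eq_maximalIdeal _ bot_ne_top]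
      exact hx
  refine ⟨s, fun z => ?_⟩
  rw [← Submodule.mem_bot A, ← h2]
  exact Submodule.smul_mem_smul (Ideal.mem_span_singleton_self _) trivial

variable [IsNoetherianRing A]

/-- Existence of a system of parameters for `M`: the maximal ideal of `A / Ann M` has height `r`,
so it is minimal over an ideal with `r` generators, and lifting these to `A` gives an ideal `I`
with `A / (I + Ann M)` Artinian. -/
theorem exists_parameters (M : Type*) [AddCommGroup M] [Module A M] [Module.Finite A M]
    (r : ℕ) (hr : mDim A M = (r : ℕ∞)) :
    ∃ t : Finset A, t.card ≤ r ∧ (∀ x ∈ t, x ∈ IsLocalRing.maximalIdeal A) ∧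
      Module.length A (M ⧸ (Ideal.span (t : Set A) • ⊤ : Submodule A M)) ≠ ⊤ := by
  classical
  unfold mDim at hr
  set a := Module.annihilator A M
  have hnt : Nontrivial (A ⧸ a) := by
    by_contra h
    rw [not_nontrivial_iff_subsingleton] at h
    rw [ringKrullDim_eq_bot_of_subsingleton] at hr
    exact WithBot.bot_ne_coe hr
  have hsurj : Function.Surjective (Ideal.Quotient.mk a) := Ideal.Quotient.mk_surjective
  have : IsLocalRing (A ⧸ a) := IsLocalRing.of_surjective' _ hsurj
  obtain ⟨s, hs, hcard⟩ := Ideal.exists_finset_card_eq_height_of_isNoetherianRing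
    (IsLocalRing.maximalIdeal (A ⧸ a))
  have hsr : s.card = r := by
    have h := IsLocalRing.maximalIdeal_height_eq_ringKrullDim (R := A ⧸ a)
    rw [hr, WithBot.coe_inj, ← hcard] at h
    exact_mod_cast h
  choose l hl using hsurj
  let t := s.image l
  have hmap : Ideal.span (s : Set (A ⧸ a)) ≤
      (Ideal.span (t : Set A)).map (Ideal.Quotient.mk a) := by
    rw [Ideal.span_le]
    intro y hy
    rw [← hl y]
    exact Ideal.mem_map_of_mem _ (Ideal.subset_span (Finset.mem_image_of_mem l hy))
  have htm : ∀ x ∈ t, x ∈ IsLocalRing.maximalIdeal A := by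
    intro x hx
    obtain ⟨y, hy, rfl⟩ := Finset.mem_image.mp hx
    have hy' : y ∈ IsLocalRing.maximalIdeal (A ⧸ a) := hs.1.2 (Ideal.subset_span hy)
    rw [IsLocalRing.mem_maximalIdeal, mem_nonunits_iff] at hy' ⊢
    intro hu
    exact hy' (hl y ▸ hu.map (Ideal.Quotient.mk a))
  refine ⟨t, hsr ▸ Finset.card_image_le, htm, ?_⟩
  set I := Ideal.span (t : Set A) ⊔ a with hI
  have hIM : (I • ⊤ : Submodule A M) = Ideal.span (t : Set A) • ⊤ := by
    have h0 : (a • ⊤ : Submodule A M) = ⊥ := by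
      rw [eq_bot_iff, Submodule.smul_le]
      intro x hx m _
      rw [Module.mem_annihilator.mp hx m]
      exact zero_mem _
    rw [hI, Submodule.sup_smul, h0, sup_bot_eq]
  -- A prime containing `I` is the preimage of one containing the image of `I` in `A ⧸ a`, over
  -- which the maximal ideal is minimal.
  have hprime : ∀ P : Ideal A, P.IsPrime → I ≤ P → P = IsLocalRing.maximalIdeal A := by
    intro P hP hIP
    refine le_antisymm (IsLocalRing.le_maximalIdeal hP.ne_top) ?_
    have hk : RingHom.ker (Ideal.Quotient.mk a) ≤ P := by
      rw [Ideal.mk_ker]; exact le_sup_right.trans hIP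
    have hP' := Ideal.map_isPrime_of_surjective Ideal.Quotient.mk_surjective hk
    have h1 := hs.2 ⟨hP', hmap.trans (Ideal.map_mono (le_sup_left.trans hIP))⟩
      (IsLocalRing.le_maximalIdeal hP'.ne_top)
    intro x hx
    have hx' : Ideal.Quotient.mk a x ∈ IsLocalRing.maximalIdeal (A ⧸ a) := by
      have hloc : IsLocalHom (Ideal.Quotient.mk a) :=
        IsLocalHom.of_surjective _ Ideal.Quotient.mk_surjective
      rw [IsLocalRing.mem_maximalIdeal, mem_nonunits_iff] at hx ⊢
      exact fun hu => hx (hloc.map_nonunit x hu)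
    have := h1 hx'
    rw [← Ideal.mem_comap, Ideal.comap_map_of_surjective _ Ideal.Quotient.mk_surjective] at this
    rw [← RingHom.ker_eq_comap_bot, sup_eq_left.mpr hk] at this
    exact this
  have hart : IsArtinianRing (A ⧸ I) := by
    rw [isArtinianRing_iff_krullDimLE_zero]
    refine Ring.KrullDimLE.mk₀ fun Q hQ => ?_
    have h1 : (Q.comap (Ideal.Quotient.mk I)).IsMaximal := by
      rw [hprime _ (Ideal.comap_isPrime _ _) (by
        conv_lhs => rw [← Ideal.mk_ker (I := I)]
        exact Ideal.comap_mono bot_le)]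
      infer_instance
    rw [← Ideal.map_comap_of_surjective _ (Ideal.Quotient.mk_surjective (I := I)) Q]
    refine (Ideal.map_eq_top_or_isMaximal_of_surjective _ Ideal.Quotient.mk_surjective
      h1).resolve_left ?_
    rw [Ideal.map_comap_of_surjective _ (Ideal.Quotient.mk_surjective (I := I)) Q]
    exact hQ.ne_top
  rw [← hIM]
  have : Module.Finite (A ⧸ I) (M ⧸ (I • ⊤ : Submodule A M)) :=
    Module.Finite.of_restrictScalars_finite A _ _
  rw [Module.length_eq_of_surjective (S := A) (R := A ⧸ I) Ideal.Quotient.mk_surjective]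
  exact Module.length_ne_top

/-- The Hilbert–Samuel function of `M` grows at most like `n ^ dim M`. If `x₁, …, xᵣ` are
parameters, some `s` satisfies `xᵢ ^ s M ⊆ qM` for all `i`, so
`(x₁ ^ (s n), …, xᵣ ^ (s n)) M ⊆ q ^ n M`. -/
theorem exists_length_bound (M : Type*) [AddCommGroup M] [Module A M] [Module.Finite A M]
    (r : ℕ) (hr : mDim A M = (r : ℕ∞)) (q : Ideal A)
    (hq : IsFiniteLength A (M ⧸ (q • ⊤ : Submodule A M))) :
    ∃ L : ℕ, ∀ n : ℕ, 1 ≤ n →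
      Module.length A (M ⧸ (q ^ n • ⊤ : Submodule A M)) ≤ (L * n ^ r : ℕ) := by
  obtain ⟨t, htc, htm, htl⟩ := exists_parameters M r hr
  obtain ⟨K, hK⟩ := ENat.ne_top_iff_exists.mp htl
  choose! e he using fun x hx => exists_pow_smul_eq_zero _ hq (htm x hx)
  obtain ⟨s, hs0, hse⟩ : ∃ s, 0 < s ∧ ∀ x ∈ t, e x ≤ s :=
    ⟨t.sup e + 1, Nat.succ_pos _, fun x hx => (Finset.le_sup hx).trans (Nat.le_succ _)⟩
  have hs : ∀ x ∈ t, ∀ m : M, x ^ s • m ∈ (q • ⊤ : Submodule A M) := by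
    intro x hx m
    rw [← Nat.sub_add_cancel (hse x hx), pow_add, mul_smul]
    refine Submodule.smul_mem _ _ ?_
    rw [← Submodule.Quotient.mk_eq_zero]
    exact he x hx (Submodule.Quotient.mk m)
  have hsn : ∀ x ∈ t, ∀ n : ℕ, ∀ m : M, x ^ (s * n) • m ∈ (q ^ n • ⊤ : Submodule A M) := by
    intro x hx n
    induction n with
    | zero => simp
    | succ n ih =>
      intro m
      rw [mul_add, mul_one, pow_add x, mul_smul (x ^ (s * n)), pow_succ q n, Submodule.mul_smul]
      have h1 : q • (⊤ : Submodule A M) ≤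
          (q ^ n • q • ⊤ : Submodule A M).comap (LinearMap.lsmul A M (x ^ (s * n))) := by
        rw [Submodule.smul_le]
        intro b hb z _
        rw [Submodule.mem_comap, LinearMap.lsmul_apply]
        rw [smul_comm (x ^ (s * n)) b z, ← Submodule.mul_smul, mul_comm (q ^ n) q, Submodule.mul_smul]
        exact Submodule.smul_mem_smul hb (ih z)
      exact h1 (hs x hx m)
  refine ⟨s ^ r * K, fun n hn => ?_⟩
  have hle : (Ideal.span ((fun x => x ^ (s * n)) '' (t : Set A)) ⊔ ⊥) • (⊤ : Submodule A M) ≤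
      q ^ n • ⊤ := by
    rw [sup_bot_eq, Submodule.smul_le]
    intro y hy m _
    have hspan : Ideal.span ((fun x => x ^ (s * n)) '' (t : Set A)) ≤
        ((q ^ n • ⊤ : Submodule A M).comap (LinearMap.toSpanSingleton A M m)) := by
      rw [Ideal.span_le]
      rintro _ ⟨x, hx, rfl⟩
      exact hsn x hx n m
    exact hspan hy
  refine (length_quotient_anti hle).trans ((length_quotient_span_pow M t (s * n) ⊥).trans ?_)
  rw [sup_bot_eq, ← hK]
  have : (s * n) ^ t.card * K ≤ s ^ r * K * n ^ r := by
    calc (s * n) ^ t.card * K ≤ (s * n) ^ r * K :=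
          Nat.mul_le_mul_right _ (Nat.pow_le_pow_right (Nat.mul_pos hs0 hn) htc)
      _ = _ := by ring
  exact_mod_cast this

end

/-! ### Comparison of `M'` and `M` -/

section
variable {A : Type*} [CommRing A]

theorem hsVal_eq (q : Ideal A) (M : Type*) [AddCommGroup M] [Module A M] (n : ℕ) :
    hsVal A q M n = (Module.length A (M ⧸ (q ^ n • ⊤ : Submodule A M)) : WithBot ℕ∞) :=
  (Module.coe_length A _).symm

variable {M' M M'' : Type*} [AddCommGroup M'] [Module A M'] [AddCommGroup M] [Module A M]
    [AddCommGroup M''] [Module A M'']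

/-- By Artin–Rees, `q ^ (n + k) M ∩ M' ⊆ q ^ n M'`. -/
theorem length_sub_le_of_artin_rees [IsNoetherianRing A] [Module.Finite A M] (f : M' →ₗ[A] M)
    (hf : Function.Injective f) (q : Ideal A) :
    ∃ k : ℕ, ∀ n : ℕ, Module.length A (M' ⧸ (q ^ n • ⊤ : Submodule A M')) ≤
      Module.length A (M ⧸ (q ^ (n + k) • ⊤ : Submodule A M)) := by
  obtain ⟨k, hk⟩ := Ideal.exists_pow_inf_eq_pow_smul q (LinearMap.range f)
  refine ⟨k, fun n => ?_⟩
  have hle : (q ^ (n + k) • ⊤ : Submodule A M).comap f ≤ q ^ n • ⊤ := by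
    intro x hx
    have h1 : f x ∈ (q ^ (n + k) • ⊤ ⊓ LinearMap.range f : Submodule A M) := ⟨hx, x, rfl⟩
    rw [hk (n + k) (by omega), Nat.add_sub_cancel] at h1
    have h2 : f x ∈ (q ^ n • ⊤ : Submodule A M').map f := by
      rw [Submodule.map_smul'', Submodule.map_top]
      exact Submodule.smul_mono le_rfl inf_le_right h1
    obtain ⟨y, hy, hxy⟩ := h2
    exact hf hxy ▸ hy
  refine (length_quotient_anti hle).trans ?_
  refine Module.length_le_of_injective (Submodule.mapQ _ _ f le_rfl) ?_
  rw [← LinearMap.ker_eq_bot, Submodule.ker_mapQ]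
  simp

/-- Right exactness of `M' / qM' → M / qM → M'' / qM'' → 0`. -/
theorem length_quotient_le_add (f : M' →ₗ[A] M) (g : M →ₗ[A] M'')
    (hfg : Function.Exact f g) (hg : Function.Surjective g) (q : Ideal A) :
    Module.length A (M ⧸ (q • ⊤ : Submodule A M)) ≤
      Module.length A (M' ⧸ (q • ⊤ : Submodule A M')) + Module.length A M'' := by
  have h1 : (q • ⊤ : Submodule A M') ≤ (q • ⊤ : Submodule A M).comap f := by
    rw [← Submodule.map_le_iff_le_comap, Submodule.map_smul'']
    exact Submodule.smul_mono le_rfl le_top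
  have h2 : (q • ⊤ : Submodule A M) ≤ (q • ⊤ : Submodule A M'').comap g := by
    rw [← Submodule.map_le_iff_le_comap, Submodule.map_smul'']
    exact Submodule.smul_mono le_rfl le_top
  refine (length_le_add_of_ker_le (Submodule.mapQ _ _ f h1) (Submodule.mapQ _ _ g h2) ?_).trans
    (add_le_add_right (Module.length_le_of_surjective _ (Submodule.mkQ_surjective _)) _)
  intro z hz
  obtain ⟨m, rfl⟩ := Submodule.Quotient.mk_surjective _ z
  have hm : g m ∈ (q • ⊤ : Submodule A M'') := by
    rw [← Submodule.Quotient.mk_eq_zero]; exact hz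
  rw [← LinearMap.range_eq_top.mpr hg, ← Submodule.map_top, ← Submodule.map_smul''] at hm
  obtain ⟨u, hu, hgu⟩ := hm
  obtain ⟨w, hw⟩ := (hfg (m - u)).mp (by rw [map_sub, hgu, sub_self])
  refine ⟨Submodule.Quotient.mk w, ?_⟩
  rw [Submodule.mapQ_apply, Submodule.Quotient.eq, hw]
  simpa using hu

theorem locLen_eq (f : M' →ₗ[A] M) (g : M →ₗ[A] M'') (hf : Function.Injective f)
    (hfg : Function.Exact f g) (p : PrimeSpectrum A)
    (hp : p ∉ Module.support A M'') : locLen A M' p = locLen A M p := by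
  rw [Module.notMem_support_iff] at hp
  have hinj := LocalizedModule.map_injective p.asIdeal.primeCompl f hf
  have hsurj : Function.Surjective (LocalizedModule.map p.asIdeal.primeCompl f) := fun y =>
    (LocalizedModule.map_exact p.asIdeal.primeCompl f g hfg y).mp (Subsingleton.elim _ _)
  exact Order.krullDim_eq_of_orderIso
    (Submodule.orderIsoMapComap (LinearEquiv.ofBijective _ ⟨hinj, hsurj⟩))

theorem notMem_support_of_isFiniteLength [IsLocalRing A] (hM : IsFiniteLength A M)
    (p : PrimeSpectrum A) (hp : p.asIdeal ≠ IsLocalRing.maximalIdeal A) :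
    p ∉ Module.support A M := by
  obtain ⟨x, hx, hxp⟩ := SetLike.exists_of_lt
    (lt_of_le_of_ne (IsLocalRing.le_maximalIdeal p.isPrime.ne_top) hp)
  obtain ⟨s, hs⟩ := exists_pow_smul_eq_zero M hM hx
  rw [Module.notMem_support_iff']
  exact fun m => ⟨x ^ s, fun h => hxp (p.isPrime.mem_of_pow_mem s h), hs m⟩

end

/-! ### The two equalities -/

/-- If `0 → M' → M → M'' → 0` is exact with `M''` of finite length and `dim M = r ≥ 1`,
then for every ideal `q` with `M/qM` of finite length and every minimal prime `p` of
`Supp M` with `dim A/p = r`: `length_{A_p} M'_p = length_{A_p} M_p`, and the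
Hilbert–Samuel polynomials of `M'` and `M` with respect to `q` have the same leading
(degree-`r`) coefficient. -/
theorem stmt12 (A : Type*) [CommRing A] [IsNoetherianRing A] [IsLocalRing A]
    (M' M M'' : Type*) [AddCommGroup M'] [Module A M'] [AddCommGroup M] [Module A M]
    [AddCommGroup M''] [Module A M'']
    [Module.Finite A M'] [Module.Finite A M] [Module.Finite A M'']
    (f : M' →ₗ[A] M) (g : M →ₗ[A] M'')
    (hf : Function.Injective f) (hg : Function.Surjective g) (hfg : Function.Exact f g)
    (hM'' : IsFiniteLength A M'')
    (r : ℕ) (hr1 : 1 ≤ r) (hr : mDim A M = (r : ℕ∞))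
    (q : Ideal A) (hq : IsFiniteLength A (M ⧸ (q • ⊤ : Submodule A M)))
    (p : PrimeSpectrum A) (hp : Minimal (· ∈ Module.support A M) p)
    (hpr : mDim A (A ⧸ p.asIdeal) = (r : ℕ∞)) :
    locLen A M' p = locLen A M p ∧
    ∀ P' P : Polynomial ℚ, IsHSPoly A q M' P' → IsHSPoly A q M P →
      P'.coeff r = P.coeff r := by
  constructor
  · refine locLen_eq f g hf hfg p (notMem_support_of_isFiniteLength hM'' p fun h => ?_)
    rw [mDim, Ideal.annihilator_quotient, h, ringKrullDim_eq_zero_of_isField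
      ((Ideal.Quotient.maximal_ideal_iff_isField_quotient _).mp inferInstance)] at hpr
    have h0 : (0 : ℕ∞) = r := WithBot.coe_inj.mp hpr
    have : (0 : ℕ) = r := by exact_mod_cast h0
    omega
  · rintro P' P ⟨N', hN'⟩ ⟨N, hN⟩
    obtain ⟨k, hk⟩ := length_sub_le_of_artin_rees f hf q
    obtain ⟨L, hL⟩ := exists_length_bound M r hr q hq
    obtain ⟨c, hc⟩ := ENat.ne_top_iff_exists.mp (Module.length_ne_top_iff.mpr hM'')
    have e' : ∀ n ≥ N', ∃ a : ℕ,
        Module.length A (M' ⧸ (q ^ n • ⊤ : Submodule A M')) = a ∧ P'.eval (n : ℚ) = a := by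
      intro n hn
      obtain ⟨a, ha, hb⟩ := hN' n hn
      rw [hsVal_eq, WithBot.coe_inj] at ha
      exact ⟨a, ha, hb.symm⟩
    have e : ∀ n ≥ N, ∃ a : ℕ,
        Module.length A (M ⧸ (q ^ n • ⊤ : Submodule A M)) = a ∧ P.eval (n : ℚ) = a := by
      intro n hn
      obtain ⟨a, ha, hb⟩ := hN n hn
      rw [hsVal_eq, WithBot.coe_inj] at ha
      exact ⟨a, ha, hb.symm⟩
    refine hs_coeff_eq P' P r k hr1 c ?_ ?_ ?_ ?_
    · refine hs_natDegree_le P (Polynomial.C (L : ℚ) * Polynomial.X ^ r) r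
        (Polynomial.natDegree_C_mul_X_pow_le _ _) ?_
      filter_upwards [Filter.eventually_ge_atTop N, Filter.eventually_ge_atTop 1] with n hn hn1
      obtain ⟨a, ha, hb⟩ := e n hn
      have h1 := hL n hn1
      rw [ha] at h1
      have h2 : a ≤ L * n ^ r := by exact_mod_cast h1
      rw [hb]
      refine ⟨by positivity, ?_⟩
      simp only [Polynomial.eval_mul, Polynomial.eval_C, Polynomial.eval_pow, Polynomial.eval_X]
      exact_mod_cast h2
    · filter_upwards [Filter.eventually_ge_atTop N'] with n hn
      obtain ⟨a, -, hb⟩ := e' n hn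
      rw [hb]
      positivity
    · filter_upwards [Filter.eventually_ge_atTop N, Filter.eventually_ge_atTop N'] with n hn hn'
      obtain ⟨a, ha, hb⟩ := e' n hn'
      obtain ⟨a2, ha2, hb2⟩ := e (n + k) (by omega)
      have h1 := hk n
      rw [ha, ha2] at h1
      rw [hb, hb2]
      exact_mod_cast h1
    · filter_upwards [Filter.eventually_ge_atTop N, Filter.eventually_ge_atTop N'] with n hn hn'
      obtain ⟨a, ha, hb⟩ := e' n hn'
      obtain ⟨a2, ha2, hb2⟩ := e n hn
      have h1 := length_quotient_le_add f g hfg hg (q ^ n)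
      rw [ha, ha2, ← hc] at h1
      rw [hb, hb2]
      exact_mod_cast h1
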